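/- Let M, A, N be finite types. Let ρ, X : Matrix (M × A) (M × A) ℂ and J, Z : Matrix (A × N) (A × N) ℂ be such that ρ and J are positive semidefinite, ρ ≤ X, and J ≤ Z. Then the contraction over A of ρ and J is Loewner-dominated by the contraction over A of X and Z; that is, the matrix with entries ∑_{a,a'} ρ (m,a) (m',a') * J (a,n) (a',n') is ≤ the matrix with entries ∑_{a,a'} X (m,a) (m',a') * Z (a,n) (a',n'). -/

import Mathlib

open Matrix ComplexOrder Kronecker

noncomputable section

/-- Partial transpose over the last (`γ`) factor of a matrix on `α × β × γ`:
`T_γ(X) (a,b,c) (a',b',c') = X (a,b,c') (a',b',c)`. -/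
def ptLast {α β γ : Type*} (X : Matrix (α × β × γ) (α × β × γ) ℂ) :
    Matrix (α × β × γ) (α × β × γ) ℂ :=
  Matrix.of fun x y => X (x.1, x.2.1, y.2.2) (y.1, y.2.1, x.2.2)

/-- Partial transpose over `β` of a matrix on `α × β`:
`T_β(X) (a,b) (a',b') = X (a,b') (a',b)`. -/
def ptSnd {α β : Type*} (X : Matrix (α × β) (α × β) ℂ) : Matrix (α × β) (α × β) ℂ :=
  Matrix.of fun x y => X (x.1, y.2) (y.1, x.2)

/-- Joint partial transpose over `β` and `γ` of a matrix on `α × β × γ`: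
`T_{βγ}(X) (a,b,c) (a',b',c') = X (a,b',c') (a',b,c)`. -/
def ptBoth {α β γ : Type*} (X : Matrix (α × β × γ) (α × β × γ) ℂ) :
    Matrix (α × β × γ) (α × β × γ) ℂ :=
  Matrix.of fun x y => X (x.1, y.2.1, y.2.2) (y.1, x.2.1, x.2.2)

/-- Partial trace over the second factor: `(Tr_β X) a a' = ∑ b, X (a,b) (a',b)`. -/
def ptrSnd {α β : Type*} [Fintype β] (X : Matrix (α × β) (α × β) ℂ) : Matrix α α ℂ :=
  Matrix.of fun a a' => ∑ b, X (a, b) (a', b)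

/-- Membership in the separable cone `SEP(α:β)`. -/
def InSepCone {α β : Type*} [Fintype α] [Fintype β] (X : Matrix (α × β) (α × β) ℂ) : Prop :=
  ∃ (n : ℕ) (P : Fin n → Matrix α α ℂ) (Q : Fin n → Matrix β β ℂ),
    (∀ i, (P i).PosSemidef) ∧ (∀ i, (Q i).PosSemidef) ∧
    ∀ x y : α × β, X x y = ∑ i, P i x.1 y.1 * Q i x.2 y.2

/-!
The contraction of `P` and `Q` is the compression `Vᴴ (P ⊗ₖ Q) V` by `V e_(m,n) = ∑ a, e_(m,a) ⊗
e_(a,n)`, hence positive semidefinite when `P` and `Q` are. Monotonicity follows from bilinearity: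
`X * Z - ρ * J = (X - ρ) * Z + ρ * (Z - J)`, writing `*` for the contraction.
-/

theorem sum_finsetSum_mapDomain_index {ι κ α R S : Type*} [AddCommMonoid R] [AddCommMonoid S]
    (s : Finset α) (g : α → ι → κ) (x : ι →₀ R) {f : κ → R → S} (h_zero : ∀ k, f k 0 = 0)
    (h_add : ∀ k r r', f k (r + r') = f k r + f k r') :
    (∑ a ∈ s, x.mapDomain (g a)).sum f = x.sum fun i r => ∑ a ∈ s, f (g a i) r := by
  rw [← Finsupp.sum_finsetSum_index h_zero h_add, Finsupp.sum_finsetSum_comm]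
  exact Finset.sum_congr rfl fun a _ => Finsupp.sum_mapDomain_index h_zero h_add

theorem posSemidef_sum_sum_submatrix {R ι κ α : Type*} [Ring R] [PartialOrder R] [StarRing R]
    {K : Matrix κ κ R} (hK : K.PosSemidef) (s : Finset α) (g : α → ι → κ) :
    (∑ a ∈ s, ∑ b ∈ s, K.submatrix (g a) (g b)).PosSemidef := by
  refine ⟨?_, fun x => ?_⟩
  · simp only [IsHermitian, conjTranspose_sum, conjTranspose_submatrix, hK.isHermitian.eq]
    exact Finset.sum_comm
  · -- The quadratic form at `x` is that of `K` at the sum of the pushforwards of `x` along `g a`.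
    have quadForm_eq := calc
      (∑ a ∈ s, x.mapDomain (g a)).sum (fun k r =>
          (∑ a ∈ s, x.mapDomain (g a)).sum fun l t => star r * K k l * t)
      _ = x.sum fun i r => ∑ a ∈ s, x.sum fun j t => ∑ b ∈ s, star r * K (g a i) (g b j) * t := by
        simp [sum_finsetSum_mapDomain_index, mul_add, add_mul, Finset.sum_add_distrib,
          Finsupp.sum_add]
      _ = x.sum fun i r => x.sum fun j t =>
          star r * (∑ a ∈ s, ∑ b ∈ s, K.submatrix (g a) (g b)) i j * t := by
        simp only [← Finsupp.sum_finsetSum_comm, Finset.mul_sum, Finset.sum_mul, Matrix.sum_apply,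
          submatrix_apply]
    exact quadForm_eq ▸ hK.2 (∑ a ∈ s, x.mapDomain (g a))

-- Through the Schur product theorem, as `Matrix.PosSemidef.kronecker` covers only finite matrices.
theorem posSemidef_kronecker {𝕜 ι κ : Type*} [RCLike 𝕜] {P : Matrix ι ι 𝕜} {Q : Matrix κ κ 𝕜}
    (hP : P.PosSemidef) (hQ : Q.PosSemidef) : (P ⊗ₖ Q).PosSemidef :=
  (hP.submatrix Prod.fst).hadamard (hQ.submatrix Prod.snd)

/-- The contraction of `P` and `Q` over their common tensor factor `α`. Row indices in `α` are
paired with row indices and column indices with column indices. -/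
def contract {R μ α ν : Type*} [NonUnitalNonAssocSemiring R] [Fintype α]
    (P : Matrix (μ × α) (μ × α) R) (Q : Matrix (α × ν) (α × ν) R) :
    Matrix (μ × ν) (μ × ν) R :=
  Matrix.of fun x y => ∑ a, ∑ a', P (x.1, a) (y.1, a') * Q (a, x.2) (a', y.2)

theorem contract_eq_sum_submatrix_kronecker {R μ α ν : Type*} [NonUnitalNonAssocSemiring R]
    [Fintype α] (P : Matrix (μ × α) (μ × α) R) (Q : Matrix (α × ν) (α × ν) R) :
    contract P Q = ∑ a, ∑ a', (P ⊗ₖ Q).submatrix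
      (fun x : μ × ν => ((x.1, a), (a, x.2))) (fun y => ((y.1, a'), (a', y.2))) := by
  ext x y
  simp only [contract, of_apply, Matrix.sum_apply, submatrix_apply, kroneckerMap_apply]

theorem contract_sub_contract {R μ α ν : Type*} [NonUnitalNonAssocRing R] [Fintype α]
    (P P' : Matrix (μ × α) (μ × α) R) (Q Q' : Matrix (α × ν) (α × ν) R) :
    contract P' Q' - contract P Q = contract (P' - P) Q' + contract P (Q' - Q) := by
  ext x y
  simp only [contract, Matrix.sub_apply, Matrix.add_apply, of_apply, sub_mul, mul_sub,
    Finset.sum_sub_distrib, sub_add_sub_cancel]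

theorem posSemidef_contract {𝕜 μ α ν : Type*} [RCLike 𝕜] [Fintype α]
    {P : Matrix (μ × α) (μ × α) 𝕜} {Q : Matrix (α × ν) (α × ν) 𝕜}
    (hP : P.PosSemidef) (hQ : Q.PosSemidef) : (contract P Q).PosSemidef := by
  have hPQ := posSemidef_sum_sum_submatrix (posSemidef_kronecker hP hQ) Finset.univ
    fun a (x : μ × ν) => ((x.1, a), (a, x.2))
  rwa [contract_eq_sum_submatrix_kronecker]

theorem contraction_loewner_mono_general {𝕜 M A N : Type*} [RCLike 𝕜] [Fintype A]
    (ρ X : Matrix (M × A) (M × A) 𝕜) (J Z : Matrix (A × N) (A × N) 𝕜)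
    (hρ : ρ.PosSemidef) (hZ : Z.PosSemidef)
    (hρX : (X - ρ).PosSemidef) (hJZ : (Z - J).PosSemidef) :
    (contract X Z - contract ρ J).PosSemidef := by
  rw [contract_sub_contract]
  exact (posSemidef_contract hρX hZ).add (posSemidef_contract hρ hJZ)

/-- Loewner monotonicity of the contraction: if `0 ≤ ρ ≤ X` and `0 ≤ J ≤ Z`,
then the contraction of `ρ` and `J` is dominated by that of `X` and `Z`. -/
theorem contraction_loewner_mono
    {M A N : Type*} [Fintype M] [Fintype A] [Fintype N]
    (ρ X : Matrix (M × A) (M × A) ℂ) (J Z : Matrix (A × N) (A × N) ℂ)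
    (hρ : ρ.PosSemidef) (hJ : J.PosSemidef)
    (hρX : (X - ρ).PosSemidef) (hJZ : (Z - J).PosSemidef) :
    ((Matrix.of fun x y : M × N => ∑ a : A, ∑ a2 : A,
        X (x.1, a) (y.1, a2) * Z (a, x.2) (a2, y.2))
      - (Matrix.of fun x y : M × N => ∑ a : A, ∑ a2 : A,
        ρ (x.1, a) (y.1, a2) * J (a, x.2) (a2, y.2))).PosSemidef := by
  have hZ : Z.PosSemidef := add_sub_cancel J Z ▸ hJ.add hJZ
  exact contraction_loewner_mono_general ρ X J Z hρ hZ hρX hJZ
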